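/- arXiv:2001.04361 — 3 statements merged into one kernel-verified Lean document; each statement's English description precedes it below -/
import Mathlib

section
/- Let d ≥ 1 and let K ⊆ ℝ^d be a symmetric convex set. Then the image of Λ(K) under the diagonal-projection map D equals K, and moreover the image under D of the intersection of Λ(K) with the subspace of diagonal matrices also equals K; that is, D(Λ(K)) = K = D(Λ(K) ∩ δ(ℝ^d)). -/
/-!
Conjugating `diagonal p` by an orthogonal matrix `U` gives a matrix whose diagonal is `M p`, where
`M i j = (U i j)²` is doubly stochastic. By Birkhoff's theorem `M` is a convex combination of
permutation matrices, so `M p` is a convex combination of permutations of `p` and stays in every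
symmetric convex set containing `p` (`diag_conj_mem`).

The spectral theorem `A = U (diagonal λ) Uᵀ` then gives `D(Λ(K)) ⊆ K`. Applied in the reverse
direction to `A = diagonal p`, where `diagonal λ = Uᵀ (diagonal p) U`, the same fact gives
`λ ∈ K` whenever `p ∈ K`, hence `K ⊆ D(Λ(K) ∩ δ(ℝ^d))`; this avoids having to identify the
eigenvalues of `diagonal p` with a permutation of `p`.
-/

open Matrix Finset Pointwise

/-- The vector of eigenvalues of a real symmetric `d × d` matrix, listed in
non-increasing order (junk value `0` if the matrix is not symmetric). -/
noncomputable def eigVec {d : ℕ} (A : Matrix (Fin d) (Fin d) ℝ) : Fin d → ℝ :=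
  if hA : A.IsHermitian then fun i => hA.eigenvalues (Tuple.sort hA.eigenvalues i.rev) else 0

/-- A set `K ⊆ ℝ^d` is symmetric if it is invariant under all coordinate permutations. -/
def IsSymmSet {d : ℕ} (K : Set (Fin d → ℝ)) : Prop :=
  ∀ σ : Equiv.Perm (Fin d), (fun p => p ∘ σ) '' K = K

/-- The spectral set `Λ(K) = {A ∈ S²ℝ^d : λ(A) ∈ K}` of a set `K ⊆ ℝ^d`,
realized as the set of real symmetric matrices whose eigenvalue vector lies in `K`. -/
def SpectralSet {d : ℕ} (K : Set (Fin d → ℝ)) : Set (Matrix (Fin d) (Fin d) ℝ) :=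
  {A | A.IsHermitian ∧ eigVec A ∈ K}

/-- Support function of a set of vectors, w.r.t. the standard inner product. -/
noncomputable def suppVec {d : ℕ} (K : Set (Fin d → ℝ)) (c : Fin d → ℝ) : ℝ :=
  sSup {t | ∃ p ∈ K, t = ∑ i, c i * p i}

/-- Support function of a set of symmetric matrices, w.r.t. the Frobenius inner
product `⟨A,B⟩ = tr(AB)`. -/
noncomputable def suppMat {d : ℕ} (C : Set (Matrix (Fin d) (Fin d) ℝ))
    (B : Matrix (Fin d) (Fin d) ℝ) : ℝ :=
  sSup {t | ∃ A ∈ C, t = (A * B).trace}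

lemma IsSymmSet.comp_mem {d : ℕ} {K : Set (Fin d → ℝ)} (hsymm : IsSymmSet K)
    (σ : Equiv.Perm (Fin d)) {p : Fin d → ℝ} (hp : p ∈ K) : p ∘ σ ∈ K := by
  rw [← hsymm σ]
  exact ⟨p, hp, rfl⟩

lemma IsSymmSet.comp_mem_iff {d : ℕ} {K : Set (Fin d → ℝ)} (hsymm : IsSymmSet K)
    (σ : Equiv.Perm (Fin d)) {p : Fin d → ℝ} : p ∘ σ ∈ K ↔ p ∈ K := by
  refine ⟨fun h => ?_, hsymm.comp_mem σ⟩
  simpa [Function.comp_assoc] using hsymm.comp_mem σ⁻¹ h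

/-- For a symmetric set `K`, the order in which the eigenvalues are listed is irrelevant. -/
lemma eigVec_mem_iff {d : ℕ} {K : Set (Fin d → ℝ)} (hsymm : IsSymmSet K)
    {A : Matrix (Fin d) (Fin d) ℝ} (hA : A.IsHermitian) :
    eigVec A ∈ K ↔ hA.eigenvalues ∈ K := by
  rw [← hsymm.comp_mem_iff (Fin.revPerm.trans (Tuple.sort hA.eigenvalues)) (p := hA.eigenvalues)]
  simp only [eigVec, dif_pos hA]
  rfl

lemma mulVec_mem_of_doublyStochastic {d : ℕ} {K : Set (Fin d → ℝ)} (hsymm : IsSymmSet K)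
    (hconv : Convex ℝ K) {M : Matrix (Fin d) (Fin d) ℝ} (hM : M ∈ doublyStochastic ℝ (Fin d))
    {p : Fin d → ℝ} (hp : p ∈ K) : M *ᵥ p ∈ K := by
  obtain ⟨w, hw0, hw1, rfl⟩ := exists_eq_sum_perm_of_mem_doublyStochastic hM
  rw [Matrix.sum_mulVec]
  simp only [Matrix.smul_mulVec, Matrix.permMatrix_mulVec]
  exact hconv.sum_mem (fun σ _ => hw0 σ) hw1 fun σ _ => hsymm.comp_mem σ hp

/-- The entrywise squares of an orthogonal matrix form a doubly stochastic matrix. -/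
lemma sq_mem_doublyStochastic {d : ℕ} (U : Matrix.unitaryGroup (Fin d) ℝ) :
    Matrix.of (fun i j => (U : Matrix (Fin d) (Fin d) ℝ) i j ^ 2) ∈
      doublyStochastic ℝ (Fin d) := by
  rw [mem_doublyStochastic_iff_sum]
  refine ⟨fun i j => sq_nonneg _, fun i => ?_, fun j => ?_⟩
  · have h := congrFun (congrFun (Unitary.coe_mul_star_self U) i) i
    simpa [Matrix.mul_apply, Matrix.star_apply, sq] using h
  · have h := congrFun (congrFun (Unitary.coe_star_mul_self U) j) j
    simpa [Matrix.mul_apply, Matrix.star_apply, sq] using h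

/-- The easy half of the Schur–Horn theorem: the diagonal of an orthogonal conjugate of
`diagonal p` lies in every symmetric convex set that contains `p`. -/
lemma diag_conj_mem {d : ℕ} {K : Set (Fin d → ℝ)} (hsymm : IsSymmSet K) (hconv : Convex ℝ K)
    (U : Matrix.unitaryGroup (Fin d) ℝ) {p : Fin d → ℝ} (hp : p ∈ K) :
    (fun i => Unitary.conjStarAlgAut ℝ _ U (Matrix.diagonal p) i i) ∈ K := by
  convert mulVec_mem_of_doublyStochastic hsymm hconv (sq_mem_doublyStochastic U) hp using 1
  ext i
  rw [Unitary.conjStarAlgAut_apply]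
  simp only [Matrix.mul_apply (N := star _), Matrix.mul_diagonal, Matrix.star_apply, star_trivial,
    Matrix.mulVec, dotProduct, Matrix.of_apply]
  exact Finset.sum_congr rfl fun j _ => by ring

/-- For a symmetric convex set `K ⊆ ℝ^d`, the diagonal projection of
`Λ(K)` equals `K`, as does the diagonal projection of `Λ(K) ∩ δ(ℝ^d)`. -/
theorem diag_image_spectralSet {d : ℕ} (hd : 1 ≤ d) (K : Set (Fin d → ℝ))
    (hsymm : IsSymmSet K) (hconv : Convex ℝ K) :
    (fun A : Matrix (Fin d) (Fin d) ℝ => fun i => A i i) '' SpectralSet K = K ∧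
    (fun A : Matrix (Fin d) (Fin d) ℝ => fun i => A i i) ''
      (SpectralSet K ∩
        Set.range (Matrix.diagonal : (Fin d → ℝ) → Matrix (Fin d) (Fin d) ℝ)) = K := by
  have h1 : (fun A : Matrix (Fin d) (Fin d) ℝ => fun i => A i i) '' SpectralSet K ⊆ K := by
    rintro _ ⟨A, ⟨hA, hK⟩, rfl⟩
    have h := diag_conj_mem hsymm hconv hA.eigenvectorUnitary ((eigVec_mem_iff hsymm hA).1 hK)
    have hs : A = Unitary.conjStarAlgAut ℝ _ hA.eigenvectorUnitary
      (Matrix.diagonal hA.eigenvalues) := hA.spectral_theorem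
    rwa [← hs] at h
  have h2 : K ⊆ (fun A : Matrix (Fin d) (Fin d) ℝ => fun i => A i i) ''
      (SpectralSet K ∩
        Set.range (Matrix.diagonal : (Fin d → ℝ) → Matrix (Fin d) (Fin d) ℝ)) := by
    intro p hp
    have hA : (Matrix.diagonal p).IsHermitian := Matrix.isHermitian_diagonal p
    refine ⟨Matrix.diagonal p, ⟨⟨hA, (eigVec_mem_iff hsymm hA).2 ?_⟩, p, rfl⟩, by simp⟩
    have h := diag_conj_mem hsymm hconv (star hA.eigenvectorUnitary) hp
    rw [hA.conjStarAlgAut_star_eigenvectorUnitary] at h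
    simpa using h
  have h3 := Set.image_mono (f := fun A : Matrix (Fin d) (Fin d) ℝ => fun i => A i i)
    (Set.inter_subset_left (s := SpectralSet K)
      (t := Set.range (Matrix.diagonal : (Fin d → ℝ) → Matrix (Fin d) (Fin d) ℝ)))
  exact ⟨h1.antisymm (h2.trans h3), (h3.trans h1).antisymm h2⟩
end

section
/- Let d ≥ 1, let a = (a₁ ≥ a₂ ≥ ⋯ ≥ a_d) ∈ ℝ^d with the convention a_{d+1} := 0, and let b ∈ ℝ. Then the symmetric polyhedron P_{a,b} = {x ∈ ℝ^d : ⟨σa, x⟩ ≤ b for all σ ∈ S_d} equals the set {x ∈ ℝ^d : ⟨a^𝓘, x⟩ ≤ b for all numerical chains 𝓘}, where for a numerical chain 𝓘 = (I₁, …, I_d) one sets a^𝓘 = Σ_{j=1}^{d} (a_j − a_{j+1})·𝟙_{I_j}. -/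
/-!
For a permutation `σ`, the sets `{i | σ i ≤ j}` form a (nested) numerical chain, and summation by
parts shows that its chain vector is `a ∘ σ` (`chainVec_initial`). Hence the chain inequalities
include the permutation inequalities. Conversely, fix `x` and let `σ` rank the coordinates of `x` in
non-increasing order. Then `{i | σ i ≤ j}` maximizes `∑ i ∈ T, x i` among all sets `T` of
cardinality `j + 1` (`sum_le_sum_initial`). Since the coefficients `a_j - a_{j+1}` are nonnegative
for `j < d`, and the set of cardinality `d` is unique, so that the sign of `a_d` does not matter,
every chain inequality at `x` follows from the inequality for this `σ`.
-/

open Matrix Finset Pointwise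

/-- A numerical chain `(I₁, …, I_d)`: subsets of `{1,…,d}` with `|I_j| = j`
(here `I j` plays the role of `I_{j+1}`, of cardinality `j + 1`). -/
def IsNumericalChain {d : ℕ} (I : Fin d → Finset (Fin d)) : Prop :=
  ∀ j : Fin d, (I j).card = (j : ℕ) + 1

/-- The vector `a^𝓘 = Σ_{j=1}^{d} (a_j − a_{j+1})·𝟙_{I_j}`, with `a_{d+1} := 0`. -/
def chainVec {d : ℕ} (a : Fin d → ℝ) (I : Fin d → Finset (Fin d)) : Fin d → ℝ :=
  fun i => ∑ j : Fin d,
    (a j - if h : (j : ℕ) + 1 < d then a ⟨(j : ℕ) + 1, h⟩ else 0) *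
      (if i ∈ I j then 1 else 0)

/-- The initial chain of a permutation `σ`: its sets consist of the indices that `σ` sends into
an initial segment. -/
def initialChain {d : ℕ} (σ : Equiv.Perm (Fin d)) (j : Fin d) : Finset (Fin d) :=
  {i | σ i ≤ j}

lemma isNumericalChain_initialChain {d : ℕ} (σ : Equiv.Perm (Fin d)) :
    IsNumericalChain (initialChain σ) := by
  intro j
  have h : initialChain σ j = (Iic j).map σ.symm.toEmbedding := by
    ext i
    simp [initialChain]
  rw [h, card_map, Fin.card_Iic]

lemma sum_range_telescope (A : ℕ → ℝ) {k n : ℕ} (hkn : k ≤ n) :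
    ∑ j ∈ range n, (A j - A (j + 1)) * (if k ≤ j then 1 else 0) = A k - A n := by
  induction n, hkn using Nat.le_induction with
  | base =>
    rw [sub_self]
    refine sum_eq_zero fun j hj => ?_
    rw [if_neg (by simpa using hj), mul_zero]
  | succ n hn ih =>
    rw [sum_range_succ, ih, if_pos hn]
    ring

lemma chainVec_initial {d : ℕ} (a : Fin d → ℝ) (σ : Equiv.Perm (Fin d)) (i : Fin d) :
    chainVec a (initialChain σ) i = a (σ i) := by
  -- Extending `a` by zero to `ℕ` builds in the convention `a_{d+1} = 0`.
  let A : ℕ → ℝ := fun n => if h : n < d then a ⟨n, h⟩ else 0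
  have h := sum_range_telescope A (σ i).isLt.le
  rw [← Fin.sum_univ_eq_sum_range
    (fun j => (A j - A (j + 1)) * (if (σ i : ℕ) ≤ j then 1 else 0)) d] at h
  have hA : ∀ k : Fin d, A k = a k := fun k => dif_pos k.isLt
  have hd : A d = 0 := dif_neg (lt_irrefl d)
  rw [hA, hd, sub_zero] at h
  rw [← h]
  refine sum_congr rfl fun j _ => ?_
  simp only [hA, initialChain, mem_filter, mem_univ, true_and, Fin.le_def]
  rfl

lemma sum_chainVec_mul {d : ℕ} (a x : Fin d → ℝ) (I : Fin d → Finset (Fin d)) :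
    ∑ i, chainVec a I i * x i =
      ∑ j : Fin d, (a j - if h : (j : ℕ) + 1 < d then a ⟨(j : ℕ) + 1, h⟩ else 0) *
        ∑ i ∈ I j, x i := by
  simp only [chainVec, sum_mul]
  rw [sum_comm]
  refine sum_congr rfl fun j _ => ?_
  simp only [mul_assoc, ← mul_sum, ite_mul, one_mul, zero_mul, sum_ite_mem, univ_inter]

/-- If `σ` ranks the coordinates of `x` in non-increasing order, the first `j + 1` of them have the
largest sum among all sets of `j + 1` coordinates. -/
lemma sum_le_sum_initial {d : ℕ} {x : Fin d → ℝ} {σ : Equiv.Perm (Fin d)}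
    (hx : Antitone (x ∘ σ.symm)) (j : Fin d) {T : Finset (Fin d)} (hT : T.card = (j : ℕ) + 1) :
    ∑ i ∈ T, x i ≤ ∑ i ∈ initialChain σ j, x i := by
  have hc := isNumericalChain_initialChain σ j
  -- As the cardinalities agree, the threshold value `c` may be subtracted from every coordinate;
  -- then `initialChain σ j` collects only nonnegative terms and omits only nonpositive ones.
  set c := x (σ.symm j)
  have key : ∑ i ∈ T, (x i - c) ≤ ∑ i ∈ initialChain σ j, (x i - c) := by
    rw [← univ_inter T, ← univ_inter (initialChain σ j), ← sum_ite_mem univ T,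
      ← sum_ite_mem univ (initialChain σ j)]
    refine sum_le_sum fun i _ => ?_
    by_cases hi : σ i ≤ j
    · have h := hx hi
      simp only [Function.comp_apply, Equiv.symm_apply_apply] at h
      have hm : i ∈ initialChain σ j := by simpa [initialChain] using hi
      rw [if_pos hm]
      split_ifs
      · exact le_rfl
      · exact sub_nonneg.2 h
    · have h := hx (not_le.1 hi).le
      simp only [Function.comp_apply, Equiv.symm_apply_apply] at h
      have hm : i ∉ initialChain σ j := by simpa [initialChain] using hi
      rw [if_neg hm]
      split_ifs
      · exact sub_nonpos.2 h
      · exact le_rfl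
  simpa [sum_sub_distrib, hT, hc] using key

/-- For `a₁ ≥ ⋯ ≥ a_d` and `b ∈ ℝ`, the symmetric polyhedron
`P_{a,b} = {x : ⟨σa, x⟩ ≤ b ∀σ}` equals `{x : ⟨a^𝓘, x⟩ ≤ b for all numerical chains 𝓘}`. -/
theorem symmPolyhedron_eq_chain_description {d : ℕ} (hd : 1 ≤ d)
    (a : Fin d → ℝ) (ha : Antitone a) (b : ℝ) :
    {x : Fin d → ℝ | ∀ σ : Equiv.Perm (Fin d), ∑ i, a (σ i) * x i ≤ b} =
    {x : Fin d → ℝ | ∀ I : Fin d → Finset (Fin d), IsNumericalChain I →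
      ∑ i, chainVec a I i * x i ≤ b} := by
  ext x
  simp only [Set.mem_ofPred_eq]
  constructor
  · intro hP I hI
    let σ : Equiv.Perm (Fin d) := (Tuple.sort (-x)).symm
    have hx : Antitone (x ∘ σ.symm) := fun i j hij =>
      neg_le_neg_iff.1 (Tuple.monotone_sort (-x) hij)
    refine le_trans ?_ (hP σ)
    simp only [← chainVec_initial a σ]
    rw [sum_chainVec_mul, sum_chainVec_mul]
    refine sum_le_sum fun j _ => ?_
    by_cases hj : (j : ℕ) + 1 < d
    · refine mul_le_mul_of_nonneg_left (sum_le_sum_initial hx j (hI j)) ?_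
      rw [dif_pos hj]
      exact sub_nonneg.2 (ha (Fin.le_def.2 (Nat.le_succ _)))
    · -- The coefficient `a_d` may be negative, but both last sets are all of `Fin d`.
      have full : ∀ J : Fin d → Finset (Fin d), IsNumericalChain J → J j = univ := by
        intro J hJ
        rw [← card_eq_iff_eq_univ, hJ j, Fintype.card_fin]
        omega
      rw [full I hI, full _ (isNumericalChain_initialChain σ)]
  · intro hC σ
    simpa only [chainVec_initial] using hC _ (isNumericalChain_initialChain σ)
end

section
/- Let d ≥ 1. A convex body K ⊆ S²ℝ^d is a spectral zonotope if and only if there exist vectors z₁, …, z_m ∈ ℝ^d such that the support function of K satisfies h_K(B) = Σ_{i=1}^{m} Σ_{σ ∈ S_d} |⟨σ z_i, λ(B)⟩| for all B ∈ S²ℝ^d. -/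
/-!
The proof rests on one formula: for a permutation-invariant convex set `M`, the maximum of
`⟨·, B⟩` over `Λ(M)` is the maximum of `⟨·, λ(B)⟩` over `M` (`isGreatest_spectralSet`). Writing
`B = V diag(λ(B)) Vᵀ` gives `tr(AB) = ⟨diag(Vᵀ A V), λ(B)⟩`, so it suffices that the diagonal of
`A ∈ Λ(M)` in any orthonormal basis lies in `M`. Such a diagonal is a doubly stochastic matrix
(the squared entries of an orthogonal matrix) applied to `λ(A)`, and Birkhoff's theorem puts it in
the convex hull of the permutations of `λ(A)` (`diag_conjDiag_mem`). The same fact shows that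
`Λ(M)` is convex.

Since maxima of linear functionals add up under Minkowski sums, and the maximum over a segment
`σ[-z, z]` is `|⟨σ z, ·⟩|`, a spectral zonotope has the stated support function
(`isGreatest_spectralZonotope`). Conversely, a body with this support function has the same
support function as the spectral zonotope with the same generators. Both are compact and convex, so
they coincide by Hahn–Banach separation (`subset_of_suppMat_le`).
-/

open Matrix Finset Pointwise

/-- The symmetric zonotope `Z(z) = Σ_{σ ∈ S_d} σ[−z, z]` (Minkowski sum of segments). -/
def symmZonotope {d : ℕ} (z : Fin d → ℝ) : Set (Fin d → ℝ) :=
  ∑ σ : Equiv.Perm (Fin d), (fun p => p ∘ σ) '' segment ℝ (-z) z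

/-- The matrix `V diag(p) Vᵀ`. -/
def conjDiag {d : ℕ} (V : Matrix (Fin d) (Fin d) ℝ) (p : Fin d → ℝ) :
    Matrix (Fin d) (Fin d) ℝ :=
  V * diagonal p * Vᵀ

lemma conjDiag_isHermitian {d : ℕ} (V : Matrix (Fin d) (Fin d) ℝ) (p : Fin d → ℝ) :
    (conjDiag V p).IsHermitian := by
  simp [conjDiag, IsHermitian, conjTranspose_eq_transpose_of_trivial, transpose_mul, mul_assoc]

lemma exists_conjDiag_eigVec {d : ℕ} {A : Matrix (Fin d) (Fin d) ℝ} (hA : A.IsHermitian) :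
    ∃ V : Matrix (Fin d) (Fin d) ℝ, V * Vᵀ = 1 ∧ A = conjDiag V (eigVec A) := by
  set τ : Equiv.Perm (Fin d) := Fin.revPerm.trans (Tuple.sort hA.eigenvalues) with hτ
  have he : eigVec A = hA.eigenvalues ∘ τ := by
    ext i
    simp only [eigVec, dif_pos hA, hτ]
    rfl
  set U : Matrix (Fin d) (Fin d) ℝ := (hA.eigenvectorUnitary).1 with hU
  have hUU : U * Uᵀ = 1 := by
    have := (mem_unitaryGroup_iff (A := U)).1 hA.eigenvectorUnitary.2
    simpa [star_eq_conjTranspose, conjTranspose_eq_transpose_of_trivial] using this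
  have hAU : A = conjDiag U hA.eigenvalues := by
    have h := hA.spectral_theorem
    rw [Unitary.conjStarAlgAut_apply] at h
    simpa [conjDiag, star_eq_conjTranspose, conjTranspose_eq_transpose_of_trivial,
      Function.comp_def] using h
  refine ⟨U.submatrix id τ, ?_, ?_⟩
  · rw [transpose_submatrix, submatrix_mul_equiv, hUU]
    simp
  · rw [he, conjDiag, ← submatrix_diagonal_equiv, transpose_submatrix, submatrix_mul_equiv,
      submatrix_mul_equiv, submatrix_id_id]
    exact hAU

/-- The squared entries of an orthogonal matrix form a doubly stochastic matrix, so by Birkhoff's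
theorem the diagonal of `W diag(p) Wᵀ` lies in the convex hull of the permutations of `p`. -/
lemma diag_conjDiag_mem {d : ℕ} {M : Set (Fin d → ℝ)} (hM : Convex ℝ M)
    (hsymm : ∀ p ∈ M, ∀ σ : Equiv.Perm (Fin d), p ∘ σ ∈ M)
    {W : Matrix (Fin d) (Fin d) ℝ} (hW : W * Wᵀ = 1) {p : Fin d → ℝ} (hp : p ∈ M) :
    diag (conjDiag W p) ∈ M := by
  have hW' : Wᵀ * W = 1 := mul_eq_one_comm.1 hW
  set D : Matrix (Fin d) (Fin d) ℝ := of fun i k => W i k * W i k with hD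
  have hDp : diag (conjDiag W p) = D *ᵥ p := by
    ext i
    simp only [diag_apply, conjDiag, mul_apply (M := W * diagonal p), mul_diagonal, transpose_apply, mulVec, dotProduct, hD,
      of_apply]
    exact sum_congr rfl fun k _ => by ring
  have hDS : D ∈ doublyStochastic ℝ (Fin d) := by
    refine mem_doublyStochastic_iff_sum.2 ⟨fun i j => mul_self_nonneg _, fun i => ?_, fun j => ?_⟩
    · simpa [mul_apply, hD] using congrFun (congrFun hW i) i
    · simpa [mul_apply, hD] using congrFun (congrFun hW' j) j
  have hDC : D ∈ convexHull ℝ {x | ∃ σ : Equiv.Perm (Fin d), σ.permMatrix ℝ = x} := by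
    rw [← doublyStochastic_eq_convexHull_permMatrix]
    exact hDS
  have hpre : Convex ℝ ((fun X : Matrix (Fin d) (Fin d) ℝ => X *ᵥ p) ⁻¹' M) :=
    hM.is_linear_preimage
      ⟨fun X Y => add_mulVec X Y p, fun c X => smul_mulVec c X p⟩
  rw [hDp]
  refine convexHull_min ?_ hpre hDC
  rintro _ ⟨σ, rfl⟩
  simpa [permMatrix_mulVec] using hsymm p hp σ

lemma mem_spectralSet_iff_conjDiag {d : ℕ} {M : Set (Fin d → ℝ)} (hM : Convex ℝ M)
    (hsymm : ∀ p ∈ M, ∀ σ : Equiv.Perm (Fin d), p ∘ σ ∈ M) {A : Matrix (Fin d) (Fin d) ℝ} :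
    A ∈ SpectralSet M ↔ ∃ V : Matrix (Fin d) (Fin d) ℝ, V * Vᵀ = 1 ∧ ∃ p ∈ M, A = conjDiag V p := by
  constructor
  · rintro ⟨hA, hAM⟩
    obtain ⟨V, hV, h⟩ := exists_conjDiag_eigVec hA
    exact ⟨V, hV, _, hAM, h⟩
  · rintro ⟨V, hV, p, hp, rfl⟩
    refine ⟨conjDiag_isHermitian V p, ?_⟩
    obtain ⟨U, hU, h⟩ := exists_conjDiag_eigVec (conjDiag_isHermitian V p)
    set c := eigVec (conjDiag V p)
    have hU' : Uᵀ * U = 1 := mul_eq_one_comm.1 hU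
    have hc : diagonal c = conjDiag (Uᵀ * V) p := by
      have : Uᵀ * conjDiag U c * U = diagonal c := by
        rw [conjDiag, ← mul_assoc, ← mul_assoc, hU', one_mul, mul_assoc, hU', mul_one]
      rw [← this, ← h]
      simp [conjDiag, mul_assoc, transpose_mul]
    have horth : (Uᵀ * V) * (Uᵀ * V)ᵀ = 1 := by
      rw [transpose_mul, transpose_transpose, mul_assoc, ← mul_assoc V, hV, one_mul, hU']
    have := diag_conjDiag_mem hM hsymm horth hp
    rwa [← hc, diag_diagonal] at this

/-- In every orthonormal basis, the diagonal of an element of `Λ(M)` lies in `M`. -/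
lemma diag_mem_of_mem_spectralSet {d : ℕ} {M : Set (Fin d → ℝ)} (hM : Convex ℝ M)
    (hsymm : ∀ p ∈ M, ∀ σ : Equiv.Perm (Fin d), p ∘ σ ∈ M) {A : Matrix (Fin d) (Fin d) ℝ}
    (hA : A ∈ SpectralSet M) {U : Matrix (Fin d) (Fin d) ℝ} (hU : U * Uᵀ = 1) :
    diag (Uᵀ * A * U) ∈ M := by
  obtain ⟨V, hV, p, hp, rfl⟩ := (mem_spectralSet_iff_conjDiag hM hsymm).1 hA
  have hU' : Uᵀ * U = 1 := mul_eq_one_comm.1 hU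
  have horth : (Uᵀ * V) * (Uᵀ * V)ᵀ = 1 := by
    rw [transpose_mul, transpose_transpose, mul_assoc, ← mul_assoc V, hV, one_mul, hU']
  have := diag_conjDiag_mem hM hsymm horth hp
  simpa [conjDiag, mul_assoc, transpose_mul] using this

lemma convex_spectralSet {d : ℕ} {M : Set (Fin d → ℝ)} (hM : Convex ℝ M)
    (hsymm : ∀ p ∈ M, ∀ σ : Equiv.Perm (Fin d), p ∘ σ ∈ M) : Convex ℝ (SpectralSet M) := by
  intro A hA B hB a b ha hb hab
  have hH : (a • A + b • B).IsHermitian := by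
    have h1 : Aᴴ = A := hA.1
    have h2 : Bᴴ = B := hB.1
    rw [IsHermitian, conjTranspose_add, conjTranspose_smul, conjTranspose_smul, h1, h2,
      star_trivial, star_trivial]
  refine ⟨hH, ?_⟩
  -- The eigenvalues of the combination are its diagonal in an orthonormal basis of eigenvectors.
  obtain ⟨U, hU, h⟩ := exists_conjDiag_eigVec hH
  have hU' : Uᵀ * U = 1 := mul_eq_one_comm.1 hU
  set c := eigVec (a • A + b • B)
  have hc : Uᵀ * conjDiag U c * U = diagonal c := by
    rw [conjDiag, ← mul_assoc, ← mul_assoc, hU', one_mul, mul_assoc, hU', mul_one]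
  have key : c = a • diag (Uᵀ * A * U) + b • diag (Uᵀ * B * U) := by
    rw [← diag_diagonal c, ← hc, ← h]
    simp [mul_add, add_mul]
  rw [key]
  exact hM (diag_mem_of_mem_spectralSet hM hsymm hA hU)
    (diag_mem_of_mem_spectralSet hM hsymm hB hU) ha hb hab

lemma isCompact_orthogonal (d : ℕ) :
    IsCompact {V : Matrix (Fin d) (Fin d) ℝ | V * Vᵀ = 1} := by
  have hbox : IsCompact (Set.univ.pi fun _ : Fin d => Set.univ.pi fun _ : Fin d =>
      Set.Icc (-1 : ℝ) 1) :=
    isCompact_univ_pi fun _ => isCompact_univ_pi fun _ => isCompact_Icc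
  refine IsCompact.of_isClosed_subset hbox ?_ ?_
  · exact isClosed_eq (by fun_prop) continuous_const
  · intro V hV i _ j _
    have hV' : V ∈ unitaryGroup (Fin d) ℝ := by
      rw [mem_unitaryGroup_iff, star_eq_conjTranspose, conjTranspose_eq_transpose_of_trivial]
      exact hV
    exact abs_le.1 (entry_norm_bound_of_unitary hV' i j)

lemma isCompact_spectralSet {d : ℕ} {M : Set (Fin d → ℝ)} (hM : Convex ℝ M)
    (hsymm : ∀ p ∈ M, ∀ σ : Equiv.Perm (Fin d), p ∘ σ ∈ M) (hc : IsCompact M) :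
    IsCompact (SpectralSet M) := by
  have h : SpectralSet M = (fun x : Matrix (Fin d) (Fin d) ℝ × (Fin d → ℝ) => conjDiag x.1 x.2) ''
      ({V | V * Vᵀ = 1} ×ˢ M) := by
    ext A
    rw [mem_spectralSet_iff_conjDiag hM hsymm]
    constructor
    · rintro ⟨V, hV, p, hp, rfl⟩
      exact ⟨(V, p), ⟨hV, hp⟩, rfl⟩
    · rintro ⟨⟨V, p⟩, ⟨hV, hp⟩, rfl⟩
      exact ⟨V, hV, p, hp, rfl⟩
  rw [h]
  refine ((isCompact_orthogonal d).prod hc).image ?_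
  unfold conjDiag
  fun_prop

/-- The maximum of `⟨·, B⟩` on `Λ(M)` equals the maximum of `⟨·, λ(B)⟩` on `M`. -/
lemma isGreatest_spectralSet {d : ℕ} {M : Set (Fin d → ℝ)} (hM : Convex ℝ M)
    (hsymm : ∀ p ∈ M, ∀ σ : Equiv.Perm (Fin d), p ∘ σ ∈ M)
    {B : Matrix (Fin d) (Fin d) ℝ} (hB : B.IsHermitian) {r : ℝ}
    (hr : IsGreatest ((fun p => ∑ i, p i * eigVec B i) '' M) r) :
    IsGreatest ((fun A => (A * B).trace) '' SpectralSet M) r := by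
  obtain ⟨V, hV, h⟩ := exists_conjDiag_eigVec hB
  have hV' : Vᵀ * V = 1 := mul_eq_one_comm.1 hV
  set c := eigVec B
  have htr (A : Matrix (Fin d) (Fin d) ℝ) :
      (A * B).trace = ∑ i, diag (Vᵀ * A * V) i * c i := by
    rw [h, conjDiag, ← mul_assoc, trace_mul_comm, ← mul_assoc, ← mul_assoc]
    simp [trace, mul_diagonal]
  constructor
  · obtain ⟨p, hp, hpr⟩ := hr.1
    refine ⟨conjDiag V p, (mem_spectralSet_iff_conjDiag hM hsymm).2 ⟨V, hV, p, hp, rfl⟩, ?_⟩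
    have hdiag : Vᵀ * conjDiag V p * V = diagonal p := by
      rw [conjDiag, ← mul_assoc, ← mul_assoc, hV', one_mul, mul_assoc, hV', mul_one]
    simp only [htr, hdiag, diag_diagonal]
    exact hpr
  · rintro _ ⟨A, hA, rfl⟩
    simp only [htr]
    exact hr.2 ⟨_, diag_mem_of_mem_spectralSet hM hsymm hA hV, rfl⟩

/-- Maxima of a linear functional are additive under Minkowski sums. -/
lemma isGreatest_sum {ι E : Type*} [Fintype ι] [AddCommGroup E] [Module ℝ E] (f : E →ₗ[ℝ] ℝ)
    (C : ι → Set E) (r : ι → ℝ) (h : ∀ i, IsGreatest (f '' C i) (r i)) :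
    IsGreatest (f '' ∑ i, C i) (∑ i, r i) := by
  constructor
  · choose x hx hxr using fun i => (h i).1
    exact ⟨∑ i, x i, (Set.mem_fintype_sum _ _).2 ⟨x, hx, rfl⟩, by simp [hxr]⟩
  · rintro _ ⟨_, hy, rfl⟩
    obtain ⟨g, hg, rfl⟩ := (Set.mem_fintype_sum _ _).1 hy
    rw [map_sum]
    exact sum_le_sum fun i _ => (h i).2 ⟨g i, hg i, rfl⟩

lemma isCompact_sum {ι E : Type*} [Fintype ι] [AddCommGroup E] [TopologicalSpace E]
    [ContinuousAdd E] (C : ι → Set E) (h : ∀ i, IsCompact (C i)) : IsCompact (∑ i, C i) :=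
  Finset.sum_induction C IsCompact (fun _ _ => IsCompact.add) isCompact_singleton fun i _ => h i

lemma convex_symmZonotope {d : ℕ} (z : Fin d → ℝ) : Convex ℝ (symmZonotope z) :=
  convex_sum _ fun σ _ => (convex_segment _ _).is_linear_image (f := fun p => p ∘ σ)
    ⟨fun _ _ => rfl, fun _ _ => rfl⟩

lemma isCompact_symmZonotope {d : ℕ} (z : Fin d → ℝ) : IsCompact (symmZonotope z) := by
  refine isCompact_sum _ fun σ => IsCompact.image ?_ (by fun_prop)
  rw [segment_eq_image_lineMap]
  exact isCompact_Icc.image AffineMap.lineMap_continuous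

lemma comp_mem_symmZonotope {d : ℕ} (z : Fin d → ℝ) :
    ∀ p ∈ symmZonotope z, ∀ σ : Equiv.Perm (Fin d), p ∘ σ ∈ symmZonotope z := by
  intro p hp τ
  obtain ⟨g, hg, rfl⟩ := (Set.mem_fintype_sum _ _).1 hp
  refine (Set.mem_fintype_sum _ _).2 ⟨fun σ => g (σ * τ⁻¹) ∘ τ, fun σ => ?_, ?_⟩
  · obtain ⟨y, hy, hyg⟩ := hg (σ * τ⁻¹)
    refine ⟨y, hy, ?_⟩
    change _ = g (σ * τ⁻¹) ∘ τ
    rw [← hyg]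
    ext i
    simp
  · refine (Equiv.sum_comp (Equiv.mulRight τ⁻¹) (fun σ => g σ ∘ τ)).trans ?_
    ext i
    simp

lemma isGreatest_symmZonotope {d : ℕ} (z c : Fin d → ℝ) :
    IsGreatest ((fun p => ∑ i, p i * c i) '' symmZonotope z)
      (∑ σ : Equiv.Perm (Fin d), |∑ j, z (σ j) * c j|) := by
  let f : (Fin d → ℝ) →ₗ[ℝ] ℝ :=
    { toFun := fun p => ∑ i, p i * c i
      map_add' := fun p q => by simp [add_mul, sum_add_distrib]
      map_smul' := fun a p => by simp [mul_sum, mul_assoc] }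
  refine isGreatest_sum f _ _ fun σ => ⟨?_, ?_⟩
  · rcases abs_choice (∑ j, z (σ j) * c j) with h | h <;> rw [h]
    · exact ⟨_, ⟨z, right_mem_segment ℝ _ _, rfl⟩, rfl⟩
    · exact ⟨_, ⟨-z, left_mem_segment ℝ _ _, rfl⟩, by simp [f]⟩
  · rintro _ ⟨_, ⟨y, ⟨a, b, ha, hb, hab, rfl⟩, rfl⟩, rfl⟩
    have h : f ((a • -z + b • z) ∘ σ) = (b - a) * ∑ j, z (σ j) * c j := by
      simp only [f, LinearMap.coe_mk, AddHom.coe_mk, mul_sum]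
      refine sum_congr rfl fun j _ => ?_
      simp
      ring
    simp only [h]
    refine (le_abs_self _).trans ?_
    rw [abs_mul]
    exact mul_le_of_le_one_left (abs_nonneg _) (abs_le.2 ⟨by linarith, by linarith⟩)

/-- The support function of a spectral zonotope; the supremum is a maximum. -/
lemma isGreatest_spectralZonotope {d m : ℕ} (z : Fin m → Fin d → ℝ)
    {B : Matrix (Fin d) (Fin d) ℝ} (hB : B.IsHermitian) :
    IsGreatest ((fun A => (A * B).trace) '' ∑ i, SpectralSet (symmZonotope (z i)))
      (∑ i, ∑ σ : Equiv.Perm (Fin d), |∑ j, z i (σ j) * eigVec B j|) := by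
  let f : Matrix (Fin d) (Fin d) ℝ →ₗ[ℝ] ℝ :=
    { toFun := fun A => (A * B).trace
      map_add' := fun A A' => by simp [add_mul]
      map_smul' := fun a A => by simp }
  exact isGreatest_sum f _ _ fun i => isGreatest_spectralSet (convex_symmZonotope _)
    (comp_mem_symmZonotope _) hB (isGreatest_symmZonotope _ _)

lemma suppMat_eq_sSup_image {d : ℕ} (C : Set (Matrix (Fin d) (Fin d) ℝ))
    (B : Matrix (Fin d) (Fin d) ℝ) : suppMat C B = sSup ((fun A => (A * B).trace) '' C) := by
  unfold suppMat
  congr 1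
  ext t
  simp [eq_comm]

lemma trace_mul_le_suppMat {d : ℕ} {C : Set (Matrix (Fin d) (Fin d) ℝ)} (hC : IsCompact C)
    (B : Matrix (Fin d) (Fin d) ℝ) {A : Matrix (Fin d) (Fin d) ℝ} (hA : A ∈ C) :
    (A * B).trace ≤ suppMat C B := by
  rw [suppMat_eq_sSup_image]
  exact le_csSup (hC.image (by fun_prop)).bddAbove ⟨A, hA, rfl⟩

/-- Every linear functional agrees on symmetric matrices with `⟨·, B⟩` for a symmetric `B`. -/
lemma exists_hermitian_trace {d : ℕ} (f : Matrix (Fin d) (Fin d) ℝ →ₗ[ℝ] ℝ) :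
    ∃ B : Matrix (Fin d) (Fin d) ℝ, B.IsHermitian ∧
      ∀ A : Matrix (Fin d) (Fin d) ℝ, A.IsHermitian → f A = (A * B).trace := by
  set C : Matrix (Fin d) (Fin d) ℝ := of fun i j => f (single j i 1) with hC
  have hf (A : Matrix (Fin d) (Fin d) ℝ) : f A = (A * C).trace := by
    conv_lhs => rw [matrix_eq_sum_single A]
    simp only [map_sum, trace, diag_apply, mul_apply]
    refine sum_congr rfl fun i _ => sum_congr rfl fun j _ => ?_
    have : single i j (A i j) = A i j • single i j (1 : ℝ) := by simp
    rw [this, map_smul]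
    rfl
  refine ⟨(1 / 2 : ℝ) • (C + Cᵀ), ?_, fun A hA => ?_⟩
  · simp [IsHermitian, conjTranspose_eq_transpose_of_trivial, add_comm]
  · have hA' : Aᵀ = A := by rwa [← conjTranspose_eq_transpose_of_trivial]
    have h1 : (A * Cᵀ).trace = (A * C).trace := by
      rw [← trace_transpose, transpose_mul, transpose_transpose, hA', trace_mul_comm]
    rw [hf, Matrix.mul_smul, trace_smul, mul_add, trace_add, h1, smul_eq_mul]
    ring

/-- Hahn–Banach: compact convex sets of symmetric matrices are compared by their support
functions. -/
lemma subset_of_suppMat_le {d : ℕ} {C L : Set (Matrix (Fin d) (Fin d) ℝ)}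
    (hCh : ∀ A ∈ C, A.IsHermitian) (hLh : ∀ A ∈ L, A.IsHermitian)
    (hC : IsCompact C) (hL : IsCompact L) (hLc : Convex ℝ L) (hLne : L.Nonempty)
    (h : ∀ B : Matrix (Fin d) (Fin d) ℝ, B.IsHermitian → suppMat C B ≤ suppMat L B) :
    C ⊆ L := by
  intro A hA
  by_contra hAL
  have : LocallyConvexSpace ℝ (Matrix (Fin d) (Fin d) ℝ) :=
    inferInstanceAs (LocallyConvexSpace ℝ (Fin d → Fin d → ℝ))
  obtain ⟨f, u, hfu, hu⟩ := geometric_hahn_banach_closed_point hLc hL.isClosed hAL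
  obtain ⟨B, hB, hfB⟩ := exists_hermitian_trace (f : Matrix (Fin d) (Fin d) ℝ →ₗ[ℝ] ℝ)
  have h1 : suppMat L B ≤ u := by
    rw [suppMat_eq_sSup_image]
    refine csSup_le (hLne.image _) ?_
    rintro _ ⟨X, hX, rfl⟩
    have := hfB X (hLh X hX)
    exact (this.symm.trans_lt (hfu X hX)).le
  have h2 : f A = (A * B).trace := hfB A (hCh A hA)
  linarith [trace_mul_le_suppMat hC B hA, h B hB]

lemma isHermitian_of_mem_sum {d m : ℕ} (M : Fin m → Set (Fin d → ℝ)) :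
    ∀ A ∈ ∑ i, SpectralSet (M i), A.IsHermitian := by
  intro A hA
  obtain ⟨g, hg, rfl⟩ := (Set.mem_fintype_sum _ _).1 hA
  rw [IsHermitian, conjTranspose_sum]
  exact sum_congr rfl fun i _ => (hg i).1

/-- A convex body `K ⊆ S²ℝ^d` is a spectral zonotope iff its support
function has the form `h_K(B) = Σ_i Σ_σ |⟨σ z_i, λ(B)⟩|`. -/
theorem spectral_zonotope_iff_support {d : ℕ} (hd : 1 ≤ d)
    (K : Set (Matrix (Fin d) (Fin d) ℝ)) (hherm : ∀ A ∈ K, A.IsHermitian)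
    (hconv : Convex ℝ K) (hcomp : IsCompact K) (hne : K.Nonempty) :
    (∃ (m : ℕ) (z : Fin m → Fin d → ℝ),
        K = ∑ i : Fin m, SpectralSet (symmZonotope (z i))) ↔
    (∃ (m : ℕ) (z : Fin m → Fin d → ℝ),
        ∀ B : Matrix (Fin d) (Fin d) ℝ, B.IsHermitian →
          suppMat K B =
            ∑ i : Fin m, ∑ σ : Equiv.Perm (Fin d), |∑ j, z i (σ j) * eigVec B j|) := by
  constructor
  · rintro ⟨m, z, rfl⟩
    refine ⟨m, z, fun B hB => ?_⟩
    rw [suppMat_eq_sSup_image]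
    exact (isGreatest_spectralZonotope z hB).csSup_eq
  · rintro ⟨m, z, h⟩
    refine ⟨m, z, ?_⟩
    have hLc : Convex ℝ (∑ i, SpectralSet (symmZonotope (z i))) :=
      convex_sum _ fun i _ =>
        convex_spectralSet (convex_symmZonotope _) (comp_mem_symmZonotope _)
    have hL : IsCompact (∑ i, SpectralSet (symmZonotope (z i))) :=
      isCompact_sum _ fun i => isCompact_spectralSet (convex_symmZonotope _)
        (comp_mem_symmZonotope _) (isCompact_symmZonotope _)
    have hLne : (∑ i, SpectralSet (symmZonotope (z i))).Nonempty :=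
      Set.image_nonempty.1 ⟨_, (isGreatest_spectralZonotope z isHermitian_zero).1⟩
    have hLh := isHermitian_of_mem_sum fun i => symmZonotope (z i)
    have heq (B : Matrix (Fin d) (Fin d) ℝ) (hB : B.IsHermitian) :
        suppMat K B = suppMat (∑ i, SpectralSet (symmZonotope (z i))) B := by
      rw [h B hB, suppMat_eq_sSup_image]
      exact (isGreatest_spectralZonotope z hB).csSup_eq.symm
    exact Set.Subset.antisymm
      (subset_of_suppMat_le hherm hLh hcomp hL hLc hLne fun B hB => (heq B hB).le)
      (subset_of_suppMat_le hLh hherm hL hcomp hconv hne fun B hB => (heq B hB).ge)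
end
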